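/- arXiv:2112.05426 — 2 statements merged into one kernel-verified Lean document; each statement's English description precedes it below -/
import Mathlib

section
/- For every real α > 1 and every ε > 0 there exist a positive integer k with k ≤ 2·⌈(2^α/ε)^{1/(α−1)}⌉ + 6 and a function F assigning to every finite set P ⊂ ℝ with 0 ∈ P a feasible range assignment F(P) for P (with source 0) such that: (i) cost_α(F(P)) ≤ (1+ε)·opt_α(P) for every such P, and (ii) for every such P and every q ∈ ℝ ∖ P, the number of points p ∈ P ∪ {q} with F(P∪{q})(p) ≠ F(P)(p) is at most k, where F(P) is extended by F(P)(q) = 0. (This expresses that the dynamic broadcast range-assignment problem in ℝ¹ admits a stable approximation scheme with stability parameter k(ε) = O((1/ε)^{1/(α−1)}), covering both insertions and deletions.) -/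
open Finset

attribute [local instance] Classical.propDecidable

/-- A range assignment `ρ` for a finite point set `P` with source `s` is *feasible* if it is
nonnegative on `P` and every point of `P` is reachable from `s` via a sequence of points of `P`
in which each step is within the range of its starting point. -/
def Feasible {X : Type*} [MetricSpace X] (P : Finset X) (s : X) (ρ : X → ℝ) : Prop :=
  (∀ p ∈ P, 0 ≤ ρ p) ∧
  ∀ p ∈ P, ∃ (m : ℕ) (f : ℕ → X), f 0 = s ∧ f m = p ∧ (∀ i ≤ m, f i ∈ P) ∧
    ∀ i < m, dist (f i) (f (i + 1)) ≤ ρ (f i)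

/-- The cost `∑_{p ∈ P} ρ(p)^α` of a range assignment. -/
noncomputable def cost {X : Type*} (α : ℝ) (P : Finset X) (ρ : X → ℝ) : ℝ :=
  ∑ p ∈ P, ρ p ^ α

/-- The optimal broadcast cost: the infimum of `cost α P ρ` over feasible `ρ`. -/
noncomputable def opt {X : Type*} [MetricSpace X] (α : ℝ) (P : Finset X) (s : X) : ℝ :=
  sInf {c : ℝ | ∃ ρ : X → ℝ, Feasible P s ρ ∧ cost α P ρ = c}

open scoped Pointwise

/-! ### Gaps -/

/-- Distance from `r` to the next point of `P` on the right (0 if there is none). -/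
noncomputable def gR (P : Finset ℝ) (r : ℝ) : ℝ :=
  if h : (P.filter (fun x => r < x)).Nonempty then (P.filter (fun x => r < x)).min' h - r else 0

/-- The standard range. -/
noncomputable def sg (P : Finset ℝ) (r : ℝ) : ℝ :=
  if 0 < r then gR P r else if r < 0 then gR (-P) (-r) else 0

lemma gR_nonneg (P : Finset ℝ) (r : ℝ) : 0 ≤ gR P r := by
  unfold gR
  split_ifs with h
  · have := Finset.min'_mem _ h
    rw [Finset.mem_filter] at this
    linarith [this.2]
  · exact le_rfl

lemma sg_nonneg (P : Finset ℝ) (r : ℝ) : 0 ≤ sg P r := by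
  unfold sg
  split_ifs
  · exact gR_nonneg _ _
  · exact gR_nonneg _ _
  · exact le_rfl

lemma sg_neg (P : Finset ℝ) (r : ℝ) : sg (-P) (-r) = sg P r := by
  unfold sg
  rcases lt_trichotomy r 0 with h | h | h
  · rw [if_pos (by linarith), if_neg (by linarith), if_pos h]
  · subst h; simp
  · rw [if_neg (by linarith), if_pos (by linarith), if_pos h, neg_neg, neg_neg]

lemma gR_adj {P : Finset ℝ} {r r' : ℝ} (h' : r' ∈ P) (h : r < r')
    (hadj : ∀ x ∈ P, x ≤ r ∨ r' ≤ x) : gR P r = r' - r := by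
  have hne : (P.filter (fun x => r < x)).Nonempty := ⟨r', by simp [h', h]⟩
  unfold gR
  rw [dif_pos hne]
  congr 1
  apply le_antisymm
  · exact Finset.min'_le _ _ (by simp [h', h])
  · apply Finset.le_min'
    intro y hy
    rw [Finset.mem_filter] at hy
    rcases hadj y hy.1 with h1 | h1
    · linarith [hy.2]
    · exact h1

lemma gR_last {P : Finset ℝ} {r : ℝ} (h : ∀ x ∈ P, x ≤ r) : gR P r = 0 := by
  unfold gR
  rw [dif_neg]
  rintro ⟨x, hx⟩
  rw [Finset.mem_filter] at hx
  linarith [h x hx.1, hx.2]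

lemma gR_cases (P : Finset ℝ) (r : ℝ) : (∀ x ∈ P, x ≤ r) ∨
    ∃ r' ∈ P, r < r' ∧ ∀ x ∈ P, x ≤ r ∨ r' ≤ x := by
  by_cases h : (P.filter (fun x => r < x)).Nonempty
  · right
    have hm := Finset.min'_mem _ h
    have hl := fun y => Finset.min'_le (P.filter (fun x => r < x)) y
    set m := (P.filter (fun x => r < x)).min' h
    rw [Finset.mem_filter] at hm
    refine ⟨m, hm.1, hm.2, fun x hx => ?_⟩
    by_cases hxr : x ≤ r
    · exact Or.inl hxr
    · exact Or.inr (hl x (by simp [hx]; linarith))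
  · left
    intro x hx
    by_contra hc
    exact h ⟨x, by simp [hx]; linarith⟩

lemma gR_insert {P : Finset ℝ} {p q : ℝ} (h : q ≤ p ∨ ∃ x ∈ P, p < x ∧ x < q) :
    gR (insert q P) p = gR P p := by
  rcases gR_cases P p with h1 | ⟨r', hr', hpr, hadj⟩
  · rw [gR_last h1, gR_last]
    intro x hx
    rcases Finset.mem_insert.1 hx with rfl | hx
    · rcases h with h | ⟨y, hy, h2, h3⟩
      · exact h
      · linarith [h1 y hy]
    · exact h1 x hx
  · rw [gR_adj hr' hpr hadj, gR_adj (Finset.mem_insert_of_mem hr') hpr]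
    intro x hx
    rcases Finset.mem_insert.1 hx with rfl | hx
    · rcases h with h | ⟨y, hy, h2, h3⟩
      · exact Or.inl h
      · rcases hadj y hy with h4 | h4
        · linarith
        · right; linarith
    · exact hadj x hx

lemma neg_insert' (P : Finset ℝ) (q : ℝ) : -(insert q P) = insert (-q) (-P) := by
  ext x
  simp

lemma sg_insert_sub {P : Finset ℝ} (q : ℝ) {p₁ p₂ : ℝ} (h1 : p₁ ∈ P) (h2 : p₂ ∈ P)
    (hp1 : sg (insert q P) p₁ ≠ sg P p₁) (hp2 : sg (insert q P) p₂ ≠ sg P p₂) : p₁ = p₂ := by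
  have key : ∀ p, sg (insert q P) p ≠ sg P p →
      (0 < p ∧ p < q ∧ ∀ x ∈ P, p < x → q ≤ x) ∨ (p < 0 ∧ q < p ∧ ∀ x ∈ P, x < p → x ≤ q) := by
    intro p hp
    rcases lt_trichotomy p 0 with h | h | h
    · right
      unfold sg at hp
      rw [if_neg (by linarith), if_pos h, if_neg (by linarith), if_pos h, neg_insert'] at hp
      have := mt (gR_insert (P := -P) (p := -p) (q := -q)) hp
      push Not at this
      refine ⟨h, by linarith [this.1], fun x hx hxp => ?_⟩
      have := this.2 (-x) (by simpa using hx) (by linarith)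
      linarith
    · subst h; simp [sg] at hp
    · left
      unfold sg at hp
      rw [if_pos h, if_pos h] at hp
      have := mt (gR_insert (P := P) (p := p) (q := q)) hp
      push Not at this
      exact ⟨h, by linarith [this.1], fun x hx hxp => this.2 x hx hxp⟩
  rcases key p₁ hp1 with ⟨a, b, c⟩ | ⟨a, b, c⟩ <;> rcases key p₂ hp2 with ⟨a', b', c'⟩ | ⟨a', b', c'⟩
  · rcases lt_trichotomy p₁ p₂ with h | h | h
    · linarith [c p₂ h2 h]
    · exact h
    · linarith [c' p₁ h1 h]
  · linarith
  · linarith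
  · rcases lt_trichotomy p₁ p₂ with h | h | h
    · linarith [c' p₁ h1 h]
    · exact h
    · linarith [c p₂ h2 h]

lemma chain_ind {P : Finset ℝ} {B : ℝ} (hB : B ∈ P) (M : ℝ → Prop) (base : M B)
    (step : ∀ r ∈ P, ∀ r' ∈ P, B ≤ r → r < r' → (∀ x ∈ P, x ≤ r ∨ r' ≤ x) → M r → M r') :
    ∀ r ∈ P, B ≤ r → M r := by
  by_contra hc
  push Not at hc
  obtain ⟨r0, hr0, hB0, hM0⟩ := hc
  have hne : (P.filter (fun x => B ≤ x ∧ ¬ M x)).Nonempty := ⟨r0, by simp [hr0, hB0, hM0]⟩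
  have hm := Finset.min'_mem _ hne
  have hl := fun y => Finset.min'_le (P.filter (fun x => B ≤ x ∧ ¬ M x)) y
  set m := (P.filter (fun x => B ≤ x ∧ ¬ M x)).min' hne
  rw [Finset.mem_filter] at hm
  obtain ⟨hmP, hBm, hMm⟩ := hm
  have hBm' : B < m := lt_of_le_of_ne hBm (by rintro h; rw [← h] at hMm; exact hMm base)
  have hne2 : (P.filter (fun x => x < m)).Nonempty := ⟨B, by simp [hB, hBm']⟩
  have hk := Finset.max'_mem _ hne2
  have hk2 := fun y => Finset.le_max' (P.filter (fun x => x < m)) y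
  set k := (P.filter (fun x => x < m)).max' hne2
  rw [Finset.mem_filter] at hk
  have hBk : B ≤ k := hk2 B (by simp [hB, hBm'])
  refine hMm (step k hk.1 m hmP hBk hk.2 ?_ ?_)
  · intro x hx
    by_cases hxm : x < m
    · exact Or.inl (hk2 x (by simp [hx, hxm]))
    · exact Or.inr (by linarith)
  · by_contra hMk
    have := hl k (by simp [hk.1, hBk, hMk])
    linarith [hk.2]

lemma gap_sum {P : Finset ℝ} {u : ℝ} (hu : u ∈ P) : ∀ v ∈ P, u ≤ v →
    ∑ r ∈ P.filter (fun r => u ≤ r ∧ r < v), gR P r = v - u := by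
  apply chain_ind hu
  · rw [Finset.filter_false_of_mem]
    · simp
    · rintro x - ⟨h1, h2⟩; linarith
  · intro r hr r' hr' hur hrr hadj ih
    have : P.filter (fun x => u ≤ x ∧ x < r') = insert r (P.filter (fun x => u ≤ x ∧ x < r)) := by
      ext x
      simp only [Finset.mem_filter, Finset.mem_insert]
      constructor
      · rintro ⟨h1, h2, h3⟩
        rcases hadj x h1 with h4 | h4
        · rcases h4.lt_or_eq with h5 | h5
          · exact Or.inr ⟨h1, h2, h5⟩
          · exact Or.inl h5
        · linarith
      · rintro (rfl | ⟨h1, h2, h3⟩)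
        · exact ⟨hr, hur, hrr⟩
        · exact ⟨h1, h2, by linarith⟩
    rw [this, Finset.sum_insert (by simp), ih, gR_adj hr' hrr hadj]
    ring

lemma sum_rpow_le {ι : Type*} {α : ℝ} (hα : 1 < α) (s : Finset ι) (f : ι → ℝ)
    (hf : ∀ i ∈ s, 0 ≤ f i) : ∑ i ∈ s, f i ^ α ≤ (∑ i ∈ s, f i) ^ α := by
  classical
  induction s using Finset.induction_on with
  | empty => simp; positivity
  | insert a s ha ih =>
    rw [Finset.sum_insert ha, Finset.sum_insert ha]
    have h1 := hf a (Finset.mem_insert_self _ _)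
    have h2 : ∀ i ∈ s, 0 ≤ f i := fun i hi => hf i (Finset.mem_insert_of_mem hi)
    have := Real.add_rpow_le_rpow_add h1 (Finset.sum_nonneg h2) hα.le
    linarith [ih h2]

/-- cost of the standard chain from `u` to `v`. -/
noncomputable def cc (α : ℝ) (P : Finset ℝ) (u v : ℝ) : ℝ :=
  ∑ r ∈ P.filter (fun r => u ≤ r ∧ r < v), gR P r ^ α

lemma cc_le {α : ℝ} (hα : 1 < α) {P : Finset ℝ} {u v : ℝ} (hu : u ∈ P) (hv : v ∈ P) (h : u ≤ v) :
    cc α P u v ≤ (v - u) ^ α := by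
  rw [← gap_sum hu v hv h]
  exact sum_rpow_le hα _ _ (fun i _ => gR_nonneg _ _)

lemma cc_add (α : ℝ) (P : Finset ℝ) {u v w : ℝ} (h1 : u ≤ v) (h2 : v ≤ w) :
    cc α P u w = cc α P u v + cc α P v w := by
  unfold cc
  rw [← Finset.sum_union]
  · congr 1
    ext x
    simp only [Finset.mem_filter, Finset.mem_union]
    constructor
    · rintro ⟨a, b, c⟩
      rcases lt_or_ge x v with h | h
      · exact Or.inl ⟨a, b, h⟩
      · exact Or.inr ⟨a, h, c⟩
    · rintro (⟨a, b, c⟩ | ⟨a, b, c⟩)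
      · exact ⟨a, b, by linarith⟩
      · exact ⟨a, by linarith, c⟩
  · rw [Finset.disjoint_left]
    intro x hx hy
    rw [Finset.mem_filter] at hx hy
    linarith [hx.2.2, hy.2.1]

/-! ### Reachability -/

/-- One broadcast step. -/
def Stp (P : Finset ℝ) (ρ : ℝ → ℝ) (a b : ℝ) : Prop := b ∈ P ∧ dist a b ≤ ρ a

/-- Reachability from the source. -/
def Rch (P : Finset ℝ) (ρ : ℝ → ℝ) (p : ℝ) : Prop := Relation.ReflTransGen (Stp P ρ) 0 p

lemma Rch.mem {P : Finset ℝ} {ρ : ℝ → ℝ} (h0 : (0:ℝ) ∈ P) {p : ℝ} (h : Rch P ρ p) : p ∈ P := by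
  induction h with
  | refl => exact h0
  | tail _ h _ => exact h.1

lemma Rch.mono {P : Finset ℝ} {ρ ρ' : ℝ → ℝ} (h0 : (0:ℝ) ∈ P) (hρ : ∀ p ∈ P, ρ p ≤ ρ' p) {p : ℝ}
    (h : Rch P ρ p) : Rch P ρ' p := by
  induction h with
  | refl => exact Relation.ReflTransGen.refl
  | tail h1 h ih => exact ih.tail ⟨h.1, h.2.trans (hρ _ (Rch.mem h0 h1))⟩

lemma feasible_iff {P : Finset ℝ} {ρ : ℝ → ℝ} (h0 : (0:ℝ) ∈ P) :
    Feasible P 0 ρ ↔ (∀ p ∈ P, 0 ≤ ρ p) ∧ ∀ p ∈ P, Rch P ρ p := by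
  unfold Feasible
  refine and_congr_right fun _ => forall₂_congr fun p hp => ?_
  constructor
  · rintro ⟨m, f, hf0, hfm, hP, hd⟩
    have : ∀ i ≤ m, Rch P ρ (f i) := by
      intro i
      induction i with
      | zero => intro _; rw [hf0]; exact Relation.ReflTransGen.refl
      | succ i ih =>
        intro hi
        exact (ih (by omega)).tail ⟨hP _ hi, hd i (by omega)⟩
    rw [← hfm]
    exact this m le_rfl
  · intro h
    induction h with
    | refl => exact ⟨0, fun _ => 0, rfl, rfl, fun _ _ => h0, fun i hi => by omega⟩
    | @tail b c h1 h ih =>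
      obtain ⟨m, f, hf0, hfm, hP, hd⟩ := ih (Rch.mem h0 h1)
      refine ⟨m + 1, fun i => if i ≤ m then f i else c, by simp [hf0], by simp, ?_, ?_⟩
      · intro i hi
        by_cases him : i ≤ m
        · simpa [him] using hP i him
        · simpa [him] using h.1
      · intro i hi
        rcases (Nat.lt_succ_iff.1 hi).lt_or_eq with him | rfl
        · have h2 : i + 1 ≤ m := him
          simpa [him.le, h2] using hd i him
        · simpa [hfm] using h.2

lemma Rch.neg {P : Finset ℝ} {ρ : ℝ → ℝ} {p : ℝ}
    (h : Rch P ρ p) : Rch (-P) (fun x => ρ (-x)) (-p) := by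
  induction h with
  | refl => unfold Rch; rw [neg_zero]
  | tail h1 h ih =>
    refine ih.tail ⟨by simpa using h.1, ?_⟩
    simpa [dist_neg_neg] using h.2

lemma chain_rch {P : Finset ℝ} {τ : ℝ → ℝ} {B B' : ℝ} (hB : B ∈ P) (hr : Rch P τ B)
    (hτ : ∀ r ∈ P, B ≤ r → r < B' → gR P r ≤ τ r) :
    ∀ r ∈ P, B ≤ r → r ≤ B' → Rch P τ r := by
  apply chain_ind hB (fun r => r ≤ B' → Rch P τ r)
  · exact fun _ => hr
  · intro r hrP r' hr' hBr hrr hadj ih h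
    refine (ih (by linarith)).tail ⟨hr', ?_⟩
    have := hτ r hrP hBr (by linarith)
    rw [gR_adj hr' hrr hadj] at this
    rw [dist_comm, Real.dist_eq, abs_of_pos (by linarith)]
    exact this

lemma exit_step {P : Finset ℝ} {ρ : ℝ → ℝ} {A B : ℝ} (h0 : (0:ℝ) ∈ P) (hA : A ≤ 0) (hB : 0 ≤ B)
    {p : ℝ} (h : Rch P ρ p) (hp : ¬ (A ≤ p ∧ p ≤ B)) :
    ∃ a ∈ P, ∃ b ∈ P, A ≤ a ∧ a ≤ B ∧ dist a b ≤ ρ a ∧ ¬ (A ≤ b ∧ b ≤ B) := by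
  induction h with
  | refl => exact absurd ⟨hA, hB⟩ hp
  | @tail b c h1 h ih =>
    by_cases hb : A ≤ b ∧ b ≤ B
    · exact ⟨b, Rch.mem h0 h1, c, h.1, hb.1, hb.2, h.2, hp⟩
    · exact ih hb

/-! ### The invariant -/

lemma sg_sum_right {P T : Finset ℝ} {u v : ℝ} (hu : u ∈ P) (hv : v ∈ P) (huv : u ≤ v) (hTP : T ⊆ P)
    (hT : ∀ r ∈ T, 0 < r ∧ u ≤ r ∧ r < v) : ∑ r ∈ T, sg P r ≤ v - u := by
  rw [← gap_sum hu v hv huv]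
  calc ∑ r ∈ T, sg P r = ∑ r ∈ T, gR P r := by
        apply Finset.sum_congr rfl
        intro r hr
        simp [sg, (hT r hr).1]
    _ ≤ _ := by
        apply Finset.sum_le_sum_of_subset_of_nonneg
        · intro r hr
          rw [Finset.mem_filter]
          exact ⟨hTP hr, (hT r hr).2⟩
        · intro r _ _
          exact gR_nonneg _ _

lemma sg_sum_left {P T : Finset ℝ} {A : ℝ} (h0 : (0:ℝ) ∈ P) (hA : A ∈ P) (hA0 : A ≤ 0) (hTP : T ⊆ P)
    (hT : ∀ r ∈ T, A < r ∧ r < 0) : ∑ r ∈ T, sg P r ≤ -A := by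
  have := sg_sum_right (P := -P) (T := -T) (u := 0) (v := -A) (by simpa using h0) (by simpa using hA)
    (by linarith) (by
      intro x hx
      rw [Finset.mem_neg'] at hx ⊢
      exact hTP hx) (by
      intro r hr
      rw [Finset.mem_neg'] at hr
      have := hT _ hr
      exact ⟨by linarith, by linarith, by linarith⟩)
  rw [Finset.sum_neg_index] at this
  simp only [sg_neg] at this
  linarith

lemma sg_union (P S S' : Finset ℝ) :
    ∑ r ∈ S ∪ S', sg P r ≤ ∑ r ∈ S, sg P r + ∑ r ∈ S', sg P r := by
  rw [← Finset.sum_union_inter]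
  have := Finset.sum_nonneg (s := S ∩ S') (fun r _ => sg_nonneg P r)
  linarith

/-- A structured assignment of cost at most `C` reaching all points in `[A, B]`. -/
def Str (α : ℝ) (P : Finset ℝ) (ρ : ℝ → ℝ) (C A B : ℝ) : Prop :=
  ∃ (τ : ℝ → ℝ) (p : ℝ) (T : Finset ℝ), p ∈ P ∧ T ⊆ P ∧ (∀ r ∈ P, 0 ≤ τ r) ∧
    (∀ r ∈ T, A < r ∧ r < B ∧ r ≠ 0 ∧ r ≠ p) ∧
    (∀ r ∈ P, r ≠ 0 → r ≠ p → r ∉ T → A < r → r < B → τ r = sg P r) ∧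
    (∀ r ∈ P, r ≠ 0 → r ≠ p → (r ∈ T ∨ r ≤ A ∨ B ≤ r) → τ r = 0) ∧
    ∑ r ∈ T, sg P r ≤ 2 * ρ p ∧
    (∀ r ∈ P, A ≤ r → r ≤ B → Rch P τ r) ∧
    ∑ r ∈ P, τ r ^ α ≤ C

/-- The invariant of the process. -/
structure RInv (α : ℝ) (P : Finset ℝ) (ρ : ℝ → ℝ) (Z : Finset ℝ) (A B : ℝ) : Prop where
  hA : A ∈ P
  hB : B ∈ P
  hA0 : A ≤ 0
  hB0 : 0 ≤ B
  hZ : Z ⊆ P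
  h0Z : (0:ℝ) ∈ Z
  cl : ∀ z ∈ Z, ∀ q ∈ P, dist z q ≤ ρ z → A ≤ q ∧ q ≤ B
  hR : cc α P 0 B ≤ ∑ z ∈ Z, ρ z ^ α
  hL : cc α (-P) 0 (-A) ≤ ∑ z ∈ Z, ρ z ^ α
  str : Str α P ρ (∑ z ∈ Z, ρ z ^ α) A B

lemma Str.neg {α : ℝ} {P : Finset ℝ} {ρ : ℝ → ℝ} {C A B : ℝ} (h : Str α P ρ C A B) :
    Str α (-P) (fun x => ρ (-x)) C (-B) (-A) := by
  obtain ⟨τ, p, T, hp, hT, h1, h2, h3, h4, h5, h6, h7⟩ := h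
  refine ⟨fun x => τ (-x), -p, -T, by simpa using hp, ?_, ?_, ?_, ?_, ?_, ?_, ?_, ?_⟩
  · intro x hx
    rw [Finset.mem_neg'] at hx ⊢
    exact hT hx
  · intro r hr
    exact h1 _ (Finset.mem_neg'.1 hr)
  · intro r hr
    obtain ⟨a, b, c, d⟩ := h2 _ (Finset.mem_neg'.1 hr)
    exact ⟨by linarith, by linarith, by simpa using c, fun h => d (by rw [h, neg_neg])⟩
  · intro r hr hr0 hrp hrT ha hb
    dsimp only
    rw [h3 (-r) (Finset.mem_neg'.1 hr) (by simpa using hr0) (fun h => hrp (by rw [← h, neg_neg]))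
      (fun h => hrT (Finset.mem_neg'.2 h)) (by linarith) (by linarith), ← sg_neg, neg_neg]
  · intro r hr hr0 hrp hrT
    apply h4 (-r) (Finset.mem_neg'.1 hr) (by simpa using hr0) (fun h => hrp (by rw [← h, neg_neg]))
    rcases hrT with h | h | h
    · exact Or.inl (Finset.mem_neg'.1 h)
    · exact Or.inr (Or.inr (by linarith))
    · exact Or.inr (Or.inl (by linarith))
  · rw [Finset.sum_neg_index]
    simpa only [sg_neg, neg_neg] using h5
  · intro r hr ha hb
    have := (h6 (-r) (Finset.mem_neg'.1 hr) (by linarith) (by linarith)).neg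
    rwa [neg_neg] at this
  · rw [Finset.sum_neg_index]
    simpa only [neg_neg] using h7

lemma RInv.neg {α : ℝ} {P : Finset ℝ} {ρ : ℝ → ℝ} {Z : Finset ℝ} {A B : ℝ} (h : RInv α P ρ Z A B) :
    RInv α (-P) (fun x => ρ (-x)) (-Z) (-B) (-A) where
  hA := by simpa using h.hB
  hB := by simpa using h.hA
  hA0 := by linarith [h.hB0]
  hB0 := by linarith [h.hA0]
  hZ := by
    intro x hx
    rw [Finset.mem_neg'] at hx ⊢
    exact h.hZ hx
  h0Z := by simpa using h.h0Z
  cl := by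
    intro z hz q hq hd
    have := h.cl (-z) (Finset.mem_neg'.1 hz) (-q) (Finset.mem_neg'.1 hq) (by rwa [dist_neg_neg])
    exact ⟨by linarith, by linarith⟩
  hR := by
    rw [Finset.sum_neg_index]
    simpa only [neg_neg] using h.hL
  hL := by
    rw [Finset.sum_neg_index]
    simpa only [neg_neg] using h.hR
  str := by
    rw [Finset.sum_neg_index]
    simpa only [neg_neg] using h.str.neg

lemma inv_base {α : ℝ} (hα : 1 < α) {P : Finset ℝ} {ρ : ℝ → ℝ} (h0 : (0:ℝ) ∈ P)
    (hρ : ∀ p ∈ P, 0 ≤ ρ p) : ∃ A B, RInv α P ρ {0} A B := by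
  have hne : (P.filter (fun x => dist 0 x ≤ ρ 0)).Nonempty := ⟨0, by simp [h0, hρ 0 h0]⟩
  have hAm := Finset.min'_mem _ hne
  have hAl := fun y => Finset.min'_le (P.filter (fun x => dist 0 x ≤ ρ 0)) y
  have hBm := Finset.max'_mem _ hne
  have hBl := fun y => Finset.le_max' (P.filter (fun x => dist 0 x ≤ ρ 0)) y
  set A := (P.filter (fun x => dist 0 x ≤ ρ 0)).min' hne
  set B := (P.filter (fun x => dist 0 x ≤ ρ 0)).max' hne
  rw [Finset.mem_filter] at hAm hBm
  simp only [Finset.mem_filter] at hAl hBl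
  have hA0 : A ≤ 0 := hAl 0 ⟨h0, by simpa using hρ 0 h0⟩
  have hB0 : 0 ≤ B := hBl 0 ⟨h0, by simpa using hρ 0 h0⟩
  have hAd : -A ≤ ρ 0 := by
    have := hAm.2
    rw [Real.dist_eq, zero_sub, abs_neg, abs_of_nonpos hA0] at this
    exact this
  have hBd : B ≤ ρ 0 := by
    have := hBm.2
    rw [Real.dist_eq, zero_sub, abs_neg, abs_of_nonneg hB0] at this
    exact this
  refine ⟨A, B, hAm.1, hBm.1, hA0, hB0, by simpa using h0, by simp, ?_, ?_, ?_, ?_⟩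
  · intro z hz q hq hd
    rw [Finset.mem_singleton] at hz
    subst hz
    exact ⟨hAl q ⟨hq, hd⟩, hBl q ⟨hq, hd⟩⟩
  · rw [Finset.sum_singleton]
    refine (cc_le hα h0 hBm.1 hB0).trans ?_
    exact Real.rpow_le_rpow (by linarith) (by linarith) (by linarith)
  · rw [Finset.sum_singleton]
    refine (cc_le hα (by simpa using h0) (by simpa using hAm.1) (by linarith)).trans ?_
    exact Real.rpow_le_rpow (by linarith) (by linarith) (by linarith)
  · rw [Finset.sum_singleton]
    refine ⟨fun r => if r = 0 then ρ 0 else 0, 0,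
      P.filter (fun r => A < r ∧ r < 0) ∪ P.filter (fun r => 0 < r ∧ r < B), h0, ?_, ?_, ?_, ?_, ?_, ?_, ?_, ?_⟩
    · intro x hx
      simp only [Finset.mem_union, Finset.mem_filter] at hx
      tauto
    · intro r _
      dsimp only
      split_ifs
      · exact hρ 0 h0
      · exact le_rfl
    · intro r hr
      simp only [Finset.mem_union, Finset.mem_filter] at hr
      rcases hr with ⟨_, h1, h2⟩ | ⟨_, h1, h2⟩
      · exact ⟨h1, by linarith, h2.ne, h2.ne⟩
      · exact ⟨by linarith, h2, h1.ne', h1.ne'⟩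
    · intro r hr hr0 _ hrT ha hb
      exfalso
      apply hrT
      simp only [Finset.mem_union, Finset.mem_filter]
      rcases lt_or_gt_of_ne hr0 with h | h
      · exact Or.inl ⟨hr, ha, h⟩
      · exact Or.inr ⟨hr, h, hb⟩
    · intro r hr hr0 _ _
      simp [hr0]
    · refine (sg_union _ _ _).trans ?_
      have e1 := sg_sum_left (T := P.filter (fun r => A < r ∧ r < 0)) h0 hAm.1 hA0
        (Finset.filter_subset _ _) (fun r hr => (Finset.mem_filter.1 hr).2)
      have e2 := sg_sum_right (T := P.filter (fun r => 0 < r ∧ r < B)) h0 hBm.1 hB0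
        (Finset.filter_subset _ _) (fun r hr => by
          have := (Finset.mem_filter.1 hr).2
          exact ⟨this.1, this.1.le, this.2⟩)
      linarith
    · intro r hr ha hb
      refine Relation.ReflTransGen.single ⟨hr, ?_⟩
      simp only [if_true]
      rw [Real.dist_eq, zero_sub, abs_neg, abs_le]
      exact ⟨by linarith, by linarith⟩
    · rw [Finset.sum_eq_single 0]
      · simp
      · intro b _ hb
        simp [hb, Real.zero_rpow (by linarith : α ≠ 0)]
      · exact fun h => absurd h0 h

lemma inv_native {α : ℝ} (hα : 1 < α) {P : Finset ℝ} {ρ : ℝ → ℝ} {Z : Finset ℝ} {A B : ℝ}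
    (hρ : ∀ p ∈ P, 0 ≤ ρ p) (I : RInv α P ρ Z A B) {z : ℝ} (hz : z ∈ P) (hzZ : z ∉ Z)
    (hz0 : 0 < z) (hzB : z ≤ B) (hnat : ∀ q ∈ P, dist z q ≤ ρ z → A ≤ q)
    {b : ℝ} (hb : b ∈ P) (hbB : B < b) (hbz : dist z b ≤ ρ z) :
    ∃ A' B', RInv α P ρ (insert z Z) A' B' := by
  have hne : (P.filter (fun x => dist z x ≤ ρ z)).Nonempty := ⟨b, by simp [hb, hbz]⟩
  have hBm := Finset.max'_mem _ hne
  have hBl := fun y => Finset.le_max' (P.filter (fun x => dist z x ≤ ρ z)) y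
  set B' := (P.filter (fun x => dist z x ≤ ρ z)).max' hne
  rw [Finset.mem_filter] at hBm
  simp only [Finset.mem_filter] at hBl
  have hBB : B < B' := lt_of_lt_of_le hbB (hBl b ⟨hb, hbz⟩)
  have hBd : B' - B ≤ ρ z := by
    have := hBm.2
    rw [dist_comm, Real.dist_eq, abs_of_nonneg (by linarith)] at this
    linarith
  have hsum : ∑ x ∈ insert z Z, ρ x ^ α = ρ z ^ α + ∑ x ∈ Z, ρ x ^ α := Finset.sum_insert hzZ
  have hnn : 0 ≤ ρ z ^ α := Real.rpow_nonneg (hρ z hz) _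
  have hcc : cc α P B B' ≤ ρ z ^ α := (cc_le hα I.hB hBm.1 hBB.le).trans
    (Real.rpow_le_rpow (by linarith) hBd (by linarith))
  have hA0 := I.hA0
  have hB0 := I.hB0
  have h0P := I.hZ I.h0Z
  refine ⟨A, B', I.hA, hBm.1, I.hA0, by linarith, Finset.insert_subset hz I.hZ,
    Finset.mem_insert_of_mem I.h0Z, ?_, ?_, ?_, ?_⟩
  · intro y hy q hq hd
    rcases Finset.mem_insert.1 hy with rfl | hy
    · exact ⟨hnat q hq hd, hBl q ⟨hq, hd⟩⟩
    · have := I.cl y hy q hq hd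
      exact ⟨this.1, by linarith⟩
  · rw [hsum, cc_add α P I.hB0 hBB.le]
    linarith [I.hR]
  · rw [hsum]
    linarith [I.hL]
  · rw [hsum]
    obtain ⟨τ, p, T, hp, hT, h1, h2, h3, h4, h5, h6, h7⟩ := I.str
    have hmono : ∀ r ∈ P, τ r ≤ (if B ≤ r ∧ r < B' then max (τ r) (gR P r) else τ r) := by
      intro r _
      split_ifs
      · exact le_max_left _ _
      · exact le_rfl
    refine ⟨fun r => if B ≤ r ∧ r < B' then max (τ r) (gR P r) else τ r, p, T, hp, hT,
      ?_, ?_, ?_, ?_, h5, ?_, ?_⟩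
    · intro r hr
      exact (h1 r hr).trans (hmono r hr)
    · intro r hr
      obtain ⟨a, b, c, d⟩ := h2 r hr
      exact ⟨a, by linarith, c, d⟩
    · intro r hr hr0 hrp hrT ha hb
      dsimp only
      by_cases hBr : B ≤ r
      · rw [if_pos ⟨hBr, hb⟩, h4 r hr hr0 hrp (Or.inr (Or.inr hBr)), max_eq_right (gR_nonneg _ _)]
        unfold sg
        rw [if_pos (by linarith)]
      · rw [if_neg (by tauto)]
        exact h3 r hr hr0 hrp hrT ha (by linarith)
    · intro r hr hr0 hrp hor
      dsimp only
      rcases hor with h | h | h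
      · have := (h2 r h).2.1
        rw [if_neg (by intro h; linarith [h.1])]
        exact h4 r hr hr0 hrp (Or.inl ‹_›)
      · rw [if_neg (by intro h; linarith [h.1])]
        exact h4 r hr hr0 hrp (Or.inr (Or.inl ‹_›))
      · rw [if_neg (by intro h; linarith [h.2])]
        exact h4 r hr hr0 hrp (Or.inr (Or.inr (by linarith)))
    · intro r hr ha hb
      by_cases hBr : r ≤ B
      · exact (h6 r hr ha hBr).mono h0P hmono
      · refine chain_rch (B' := B') I.hB ((h6 B I.hB (by linarith) le_rfl).mono h0P hmono) ?_ r hr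
          (by linarith) hb
        intro x hx h8 h9
        rw [if_pos ⟨h8, h9⟩]
        exact le_max_right _ _
    · have : ∑ r ∈ P, (if B ≤ r ∧ r < B' then max (τ r) (gR P r) else τ r) ^ α ≤
          ∑ r ∈ P, τ r ^ α + cc α P B B' := by
        unfold cc
        rw [Finset.sum_filter, ← Finset.sum_add_distrib]
        apply Finset.sum_le_sum
        intro r hr
        split_ifs with hc
        · have e1 : 0 ≤ τ r ^ α := Real.rpow_nonneg (h1 r hr) _
          have e2 : 0 ≤ gR P r ^ α := Real.rpow_nonneg (gR_nonneg _ _) _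
          rcases max_choice (τ r) (gR P r) with h | h <;> rw [h] <;> linarith
        · linarith
      linarith

lemma inv_foreign {α : ℝ} (hα : 1 < α) {P : Finset ℝ} {ρ : ℝ → ℝ} {Z : Finset ℝ} {A B : ℝ}
    (hρ : ∀ p ∈ P, 0 ≤ ρ p) (I : RInv α P ρ Z A B) {z : ℝ} (hz : z ∈ P) (hzZ : z ∉ Z)
    (hz0 : 0 < z) (hzB : z ≤ B) 
    {b : ℝ} (hb : b ∈ P) (hbA : b < A) (hbz : dist z b ≤ ρ z) :
    ∃ A' B', RInv α P ρ (insert z Z) A' B' := by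
  have hA0 := I.hA0
  have hB0 := I.hB0
  have h0P := I.hZ I.h0Z
  have hne : (P.filter (fun x => dist z x ≤ ρ z)).Nonempty := ⟨b, by simp [hb, hbz]⟩
  have hAm := Finset.min'_mem _ hne
  have hAl := fun y => Finset.min'_le (P.filter (fun x => dist z x ≤ ρ z)) y
  set A' := (P.filter (fun x => dist z x ≤ ρ z)).min' hne
  rw [Finset.mem_filter] at hAm
  simp only [Finset.mem_filter] at hAl
  have hAA : A' < A := lt_of_le_of_lt (hAl b ⟨hb, hbz⟩) hbA
  have hAd : z - A' ≤ ρ z := by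
    have := hAm.2
    rw [Real.dist_eq, abs_of_nonneg (by linarith)] at this
    linarith
  obtain ⟨B', hB'P, hBB, hBl, hBd⟩ : ∃ B' ∈ P, B ≤ B' ∧ (∀ q ∈ P, dist z q ≤ ρ z → q ≤ B') ∧
      (B' = B ∨ B' - z ≤ ρ z) := by
    have hBm := Finset.max'_mem _ hne
    have hBl := fun y => Finset.le_max' (P.filter (fun x => dist z x ≤ ρ z)) y
    set B' := (P.filter (fun x => dist z x ≤ ρ z)).max' hne
    rw [Finset.mem_filter] at hBm
    simp only [Finset.mem_filter] at hBl
    rcases le_total B' B with h | h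
    · exact ⟨B, I.hB, le_rfl, fun q hq hd => (hBl q ⟨hq, hd⟩).trans h, Or.inl rfl⟩
    · refine ⟨B', hBm.1, h, fun q hq hd => (hBl q ⟨hq, hd⟩), Or.inr ?_⟩
      have := hBm.2
      rw [dist_comm, Real.dist_eq] at this
      exact (le_abs_self _).trans this
  have hBd' : B' - B ≤ ρ z := by
    rcases hBd with h | h
    · linarith
    · linarith
  have hsum : ∑ x ∈ insert z Z, ρ x ^ α = ρ z ^ α + ∑ x ∈ Z, ρ x ^ α := Finset.sum_insert hzZ
  have hnn : 0 ≤ ρ z ^ α := Real.rpow_nonneg (hρ z hz) _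
  have hcc : cc α P B B' ≤ ρ z ^ α := (cc_le hα I.hB hB'P hBB).trans
    (Real.rpow_le_rpow (by linarith) hBd' (by linarith))
  have hcc' : cc α (-P) (-A) (-A') ≤ ρ z ^ α :=
    (cc_le hα (by simpa using I.hA) (by simpa using hAm.1) (by linarith)).trans
    (Real.rpow_le_rpow (by linarith) (by linarith) (by linarith))
  refine ⟨A', B', hAm.1, hB'P, by linarith, by linarith, Finset.insert_subset hz I.hZ,
    Finset.mem_insert_of_mem I.h0Z, ?_, ?_, ?_, ?_⟩
  · intro y hy q hq hd
    rcases Finset.mem_insert.1 hy with rfl | hy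
    · exact ⟨hAl q ⟨hq, hd⟩, hBl q hq hd⟩
    · have := I.cl y hy q hq hd
      exact ⟨by linarith, by linarith⟩
  · rw [hsum, cc_add α P I.hB0 hBB]
    linarith [I.hR]
  · rw [hsum, cc_add α (-P) (v := -A) (by linarith) (by linarith)]
    linarith [I.hL]
  · rw [hsum]
    set τ : ℝ → ℝ := fun r => max (if 0 ≤ r ∧ r < B then gR P r else 0) (if r = z then ρ z else 0)
      with hτ
    have hchain : ∀ r ∈ P, 0 ≤ r → r ≤ B → Rch P τ r := by
      apply chain_rch h0P Relation.ReflTransGen.refl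
      intro r _ h1 h2
      rw [hτ]
      dsimp only
      rw [if_pos ⟨h1, h2⟩]
      exact le_max_left _ _
    have hτz : ρ z ≤ τ z := by simp [hτ]
    have hfirst : ∀ r, 0 ≤ (if 0 ≤ r ∧ r < B then gR P r else 0) := by
      intro r
      split_ifs
      · exact gR_nonneg _ _
      · exact le_rfl
    refine ⟨τ, z, P.filter (fun r => A' < r ∧ r < 0) ∪ P.filter (fun r => B ≤ r ∧ r < B' ∧ r ≠ z),
      hz, ?_, ?_, ?_, ?_, ?_, ?_, ?_, ?_⟩
    · intro x hx
      simp only [Finset.mem_union, Finset.mem_filter] at hx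
      tauto
    · intro r _
      exact (hfirst r).trans (le_max_left _ _)
    · intro r hr
      simp only [Finset.mem_union, Finset.mem_filter] at hr
      rcases hr with ⟨_, h1, h2⟩ | ⟨_, h1, h2, h3⟩
      · exact ⟨h1, by linarith, h2.ne, by linarith⟩
      · exact ⟨by linarith, h2, by linarith, h3⟩
    · intro r hr hr0 hrz hrT ha hb
      simp only [Finset.mem_union, Finset.mem_filter, not_or, not_and] at hrT
      have e1 : 0 < r := by
        by_contra hc
        exact hrT.1 hr ha (lt_of_le_of_ne (not_lt.1 hc) hr0)
      have e2 : r < B := by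
        by_contra hc
        exact hrT.2 hr (not_lt.1 hc) hb hrz
      simp only [hτ]
      rw [if_pos ⟨e1.le, e2⟩, if_neg hrz, max_eq_left (gR_nonneg _ _)]
      unfold sg
      rw [if_pos e1]
    · intro r hr hr0 hrz hor
      have : ¬ (0 ≤ r ∧ r < B) := by
        rintro ⟨e1, e2⟩
        simp only [Finset.mem_union, Finset.mem_filter] at hor
        rcases hor with (h | h) | h | h
        · linarith [h.2.2]
        · linarith [h.2.1]
        · linarith
        · linarith
      simp only [hτ]
      rw [if_neg this, if_neg hrz, max_self]
    · refine (sg_union _ _ _).trans ?_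
      have e1 := sg_sum_left (T := P.filter (fun r => A' < r ∧ r < 0)) h0P hAm.1 (by linarith)
        (Finset.filter_subset _ _) (fun r hr => (Finset.mem_filter.1 hr).2)
      have e2 := sg_sum_right (T := P.filter (fun r => B ≤ r ∧ r < B' ∧ r ≠ z)) I.hB hB'P hBB
        (Finset.filter_subset _ _) (fun r hr => by
          have := (Finset.mem_filter.1 hr).2
          exact ⟨by linarith, this.1, this.2.1⟩)
      linarith
    · intro r hr ha hb
      by_cases h : 0 ≤ r ∧ r ≤ B
      · exact hchain r hr h.1 h.2
      · refine (hchain z hz hz0.le hzB).tail ⟨hr, le_trans ?_ hτz⟩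
        rw [Real.dist_eq, abs_le]
        by_cases h0 : 0 ≤ r
        · have hBr : B < r := by
            by_contra hc
            exact h ⟨h0, not_lt.1 hc⟩
          rcases hBd with h | h
          · linarith
          · constructor <;> linarith
        · constructor <;> linarith [hρ z hz]
    · have : ∑ r ∈ P, τ r ^ α ≤ cc α P 0 B + ∑ r ∈ P, (if r = z then ρ z ^ α else 0) := by
        unfold cc
        rw [Finset.sum_filter, ← Finset.sum_add_distrib]
        apply Finset.sum_le_sum
        intro r hr
        have hz' : (0:ℝ) ^ α = 0 := Real.zero_rpow (by linarith)
        have e1 : (if 0 ≤ r ∧ r < B then gR P r ^ α else 0) =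
          (if 0 ≤ r ∧ r < B then gR P r else 0) ^ α := by split_ifs <;> simp [hz']
        have e2 : (if r = z then ρ z ^ α else 0) =
          (if r = z then ρ z else 0) ^ α := by split_ifs <;> simp [hz']
        have e3 : 0 ≤ (if r = z then ρ z ^ α else 0) := by split_ifs <;> simp [hnn]
        have e4 : 0 ≤ (if 0 ≤ r ∧ r < B then gR P r else 0) ^ α := Real.rpow_nonneg (hfirst r) _
        rw [e2] at e3
        rw [e1, e2]
        simp only [hτ]
        rcases max_choice (if 0 ≤ r ∧ r < B then gR P r else 0) (if r = z then ρ z else 0) with h | h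
          <;> rw [h] <;> linarith
      rw [Finset.sum_ite_eq' P z, if_pos hz] at this
      linarith [I.hR]

lemma rinv_pos {α : ℝ} (hα : 1 < α) {P : Finset ℝ} {ρ : ℝ → ℝ} {Z : Finset ℝ} {A B : ℝ}
    (hρ : ∀ p ∈ P, 0 ≤ ρ p) (I : RInv α P ρ Z A B) {z : ℝ} (hz : z ∈ P) (hzZ : z ∉ Z)
    (hz0 : 0 < z) (hzB : z ≤ B)
    {b : ℝ} (hb : b ∈ P) (hbAB : ¬ (A ≤ b ∧ b ≤ B)) (hbz : dist z b ≤ ρ z) :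
    ∃ A' B', RInv α P ρ (insert z Z) A' B' := by
  by_cases h : ∀ q ∈ P, dist z q ≤ ρ z → A ≤ q
  · refine inv_native hα hρ I hz hzZ hz0 hzB h hb ?_ hbz
    by_contra hc
    exact hbAB ⟨h b hb hbz, not_lt.1 hc⟩
  · push Not at h
    obtain ⟨q, hq, hd, hqA⟩ := h
    exact inv_foreign hα hρ I hz hzZ hz0 hzB hq hqA hd

lemma inv_step {α : ℝ} (hα : 1 < α) {P : Finset ℝ} {ρ : ℝ → ℝ} {Z : Finset ℝ} {A B : ℝ}
    (hρ : ∀ p ∈ P, 0 ≤ ρ p) (hf : ∀ p ∈ P, Rch P ρ p) (I : RInv α P ρ Z A B)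
    (hout : ¬ ∀ q ∈ P, A ≤ q ∧ q ≤ B) :
    ∃ z ∈ P, z ∉ Z ∧ ∃ A' B', RInv α P ρ (insert z Z) A' B' := by
  push Not at hout
  obtain ⟨q, hq, hqAB⟩ := hout
  obtain ⟨z, hz, b, hb, h1, h2, h3, h4⟩ := exit_step (I.hZ I.h0Z) I.hA0 I.hB0 (hf q hq)
    (fun h => absurd h.2 (not_le.2 (hqAB h.1)))
  have hzZ : z ∉ Z := fun h => h4 (I.cl z h b hb h3)
  refine ⟨z, hz, hzZ, ?_⟩
  rcases lt_trichotomy z 0 with h | h | h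
  · obtain ⟨A', B', J⟩ := rinv_pos hα (P := -P) (ρ := fun x => ρ (-x)) (z := -z) (b := -b)
      (fun p hp => hρ _ (Finset.mem_neg'.1 hp)) I.neg (by simpa using hz) (by simpa using hzZ)
      (by linarith) (by linarith) (by simpa using hb)
      (fun h => h4 ⟨by linarith [h.2], by linarith [h.1]⟩) (by simpa [dist_neg_neg] using h3)
    have := J.neg
    rw [neg_insert'] at this
    simp only [neg_neg] at this
    exact ⟨_, _, this⟩
  · exact absurd (h ▸ I.h0Z) hzZ
  · exact rinv_pos hα hρ I hz hzZ h h2 hb h4 h3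

lemma inv_final {α : ℝ} (hα : 1 < α) {P : Finset ℝ} {ρ : ℝ → ℝ} (h0 : (0:ℝ) ∈ P)
    (hρ : ∀ p ∈ P, 0 ≤ ρ p) (hf : ∀ p ∈ P, Rch P ρ p) :
    ∃ Z A B, RInv α P ρ Z A B ∧ ∀ q ∈ P, A ≤ q ∧ q ≤ B := by
  have main : ∀ n : ℕ, ∀ Z A B, RInv α P ρ Z A B → P.card ≤ Z.card + n →
      ∃ Z A B, RInv α P ρ Z A B ∧ ∀ q ∈ P, A ≤ q ∧ q ≤ B := by
    intro n
    induction n with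
    | zero =>
      intro Z A B I hc
      refine ⟨Z, A, B, I, ?_⟩
      by_contra hout
      obtain ⟨z, hz, hzZ, -⟩ := inv_step hα hρ hf I hout
      have := Finset.eq_of_subset_of_card_le I.hZ (by omega)
      exact hzZ (this ▸ hz)
    | succ n ih =>
      intro Z A B I hc
      by_cases hout : ∀ q ∈ P, A ≤ q ∧ q ≤ B
      · exact ⟨Z, A, B, I, hout⟩
      · obtain ⟨z, hz, hzZ, A', B', J⟩ := inv_step hα hρ hf I hout
        refine ih _ _ _ J ?_
        rw [Finset.card_insert_of_notMem hzZ]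
        omega
  obtain ⟨A, B, I⟩ := inv_base hα h0 hρ
  exact main P.card _ _ _ I (by omega)

/-! ### Truncation, existence of an optimum, conclusion -/

lemma tail_bound {α ε δ : ℝ} (hα : 1 < α) (hε : 0 < ε) (hδ : 0 ≤ δ) (K : ℕ)
    (hK : ((2:ℝ) ^ α / ε) ^ ((1:ℝ) / (α - 1)) ≤ K) (T : Finset ℝ) (g : ℝ → ℝ)
    (hg : ∀ r ∈ T, 0 ≤ g r) (hT : ∑ r ∈ T, g r ≤ 2 * δ) :
    (T.filter (fun r => 2 * δ / K < g r)).card ≤ K ∧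
    ∑ r ∈ T.filter (fun r => g r ≤ 2 * δ / K), g r ^ α ≤ ε * δ ^ α := by
  have hX : 0 < ((2:ℝ) ^ α / ε) ^ ((1:ℝ) / (α - 1)) := by positivity
  have hKpos : (0:ℝ) < K := lt_of_lt_of_le hX hK
  have hKp : (2:ℝ) ^ α / ε ≤ (K:ℝ) ^ (α - 1) := by
    have := Real.rpow_le_rpow hX.le hK (by linarith : 0 ≤ α - 1)
    rwa [← Real.rpow_mul (by positivity), one_div_mul_cancel (by linarith), Real.rpow_one] at this
  rcases hδ.eq_or_lt with rfl | hδ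
  · have hz : ∀ r ∈ T, g r = 0 := by
      apply (Finset.sum_eq_zero_iff_of_nonneg hg).1
      have := Finset.sum_nonneg hg
      linarith
    constructor
    · rw [Finset.filter_false_of_mem]
      · simp
      · intro r hr
        rw [hz r hr]
        simp
    · rw [Finset.sum_eq_zero]
      · rw [Real.zero_rpow (by linarith)]; simp
      · intro r hr
        rw [hz r (Finset.mem_filter.1 hr).1, Real.zero_rpow (by linarith)]
  · constructor
    · have h1 : ((T.filter (fun r => 2 * δ / K < g r)).card : ℝ) * (2 * δ / K) ≤
          ∑ r ∈ T.filter (fun r => 2 * δ / K < g r), g r := by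
        rw [← nsmul_eq_mul]
        apply Finset.card_nsmul_le_sum
        intro r hr
        exact (Finset.mem_filter.1 hr).2.le
      have h2 : ∑ r ∈ T.filter (fun r => 2 * δ / K < g r), g r ≤ ∑ r ∈ T, g r :=
        Finset.sum_le_sum_of_subset_of_nonneg (Finset.filter_subset _ _) (fun r hr _ => hg r hr)
      have h3 : ((T.filter (fun r => 2 * δ / K < g r)).card : ℝ) * (2 * δ / K) ≤ 2 * δ := by linarith
      have h4 : ((T.filter (fun r => 2 * δ / K < g r)).card : ℝ) ≤ K := by
        rw [← mul_div_assoc, div_le_iff₀ hKpos] at h3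
        nlinarith
      exact_mod_cast h4
    · have h1 : ∀ r ∈ T.filter (fun r => g r ≤ 2 * δ / K), g r ^ α ≤
          (2 * δ / K) ^ (α - 1) * g r := by
        intro r hr
        rw [Finset.mem_filter] at hr
        have h0 := hg r hr.1
        have : g r ^ α = g r ^ (α - 1) * g r := by
          have := Real.rpow_add_of_nonneg h0 (by linarith : 0 ≤ α - 1) zero_le_one
          rwa [sub_add_cancel, Real.rpow_one] at this
        rw [this]
        exact mul_le_mul_of_nonneg_right (Real.rpow_le_rpow h0 hr.2 (by linarith)) h0
      have h2 : ∑ r ∈ T.filter (fun r => g r ≤ 2 * δ / K), g r ≤ ∑ r ∈ T, g r :=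
        Finset.sum_le_sum_of_subset_of_nonneg (Finset.filter_subset _ _) (fun r hr _ => hg r hr)
      have hnn : 0 ≤ (2 * δ / K) ^ (α - 1) := by positivity
      calc _ ≤ ∑ r ∈ T.filter (fun r => g r ≤ 2 * δ / K), (2 * δ / K) ^ (α - 1) * g r :=
            Finset.sum_le_sum h1
        _ = (2 * δ / K) ^ (α - 1) * ∑ r ∈ T.filter (fun r => g r ≤ 2 * δ / K), g r := by
            rw [Finset.mul_sum]
        _ ≤ (2 * δ / K) ^ (α - 1) * (2 * δ) := mul_le_mul_of_nonneg_left (by linarith) hnn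
        _ = 2 ^ α * δ ^ α / (K:ℝ) ^ (α - 1) := by
            rw [Real.div_rpow (by positivity) hKpos.le, ← Real.mul_rpow (by norm_num) hδ.le,
              div_mul_eq_mul_div]
            congr 1
            have := Real.rpow_add_of_nonneg (by positivity : 0 ≤ 2 * δ) (by linarith : 0 ≤ α - 1) zero_le_one
            rw [sub_add_cancel, Real.rpow_one] at this
            exact this.symm
        _ ≤ ε * δ ^ α := by
            have hKK : 0 < (K:ℝ) ^ (α - 1) := by positivity
            rw [div_le_iff₀ hε] at hKp
            rw [div_le_iff₀ hKK]
            have : 0 ≤ δ ^ α := by positivity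
            nlinarith

lemma main_struct {α ε : ℝ} (hα : 1 < α) (hε : 0 < ε) (K : ℕ)
    (hK : ((2:ℝ) ^ α / ε) ^ ((1:ℝ) / (α - 1)) ≤ K) {P : Finset ℝ} {ρ : ℝ → ℝ} (h0 : (0:ℝ) ∈ P)
    (hf : Feasible P 0 ρ) :
    ∃ ρ', Feasible P 0 ρ' ∧ (P.filter (fun p => ρ' p ≠ sg P p)).card ≤ K + 2 ∧
      cost α P ρ' ≤ (1 + ε) * cost α P ρ := by
  rw [feasible_iff h0] at hf
  obtain ⟨Z, A, B, I, hAB⟩ := inv_final hα h0 hf.1 hf.2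
  obtain ⟨τ, p, T, hp, hT, h1, h2, h3, h4, h5, h6, h7⟩ := I.str
  obtain ⟨t1, t2⟩ := tail_bound hα hε (hf.1 p hp) K hK T (sg P) (fun r _ => sg_nonneg P r) h5
  set c := 2 * ρ p / K
  have hstd : ∀ r ∈ P, r ≠ 0 → r ≠ p → r ∉ T → τ r = sg P r := by
    intro r hr hr0 hrp hrT
    obtain ⟨ha, hb⟩ := hAB r hr
    have hA0 := I.hA0
    have hB0 := I.hB0
    rcases ha.lt_or_eq with ha' | ha'
    · rcases hb.lt_or_eq with hb' | hb'
      · exact h3 r hr hr0 hrp hrT ha' hb'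
      · rw [h4 r hr hr0 hrp (Or.inr (Or.inr hb'.ge))]
        unfold sg
        rw [if_pos (lt_of_le_of_ne (by linarith) (Ne.symm hr0)), gR_last]
        intro x hx
        linarith [(hAB x hx).2]
    · rw [h4 r hr hr0 hrp (Or.inr (Or.inl ha'.ge))]
      have : r < 0 := lt_of_le_of_ne (by linarith) hr0
      unfold sg
      rw [if_neg (by linarith), if_pos this, gR_last]
      intro x hx
      linarith [(hAB _ (Finset.mem_neg'.1 hx)).1]
  have hT0 : ∀ r ∈ T, τ r = 0 := by
    intro r hr
    obtain ⟨_, _, a, b⟩ := h2 r hr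
    exact h4 r (hT hr) a b (Or.inl hr)
  have hmono : ∀ r ∈ P, τ r ≤ (if r ∈ T ∧ sg P r ≤ c then sg P r else τ r) := by
    intro r hr
    split_ifs with h
    · rw [hT0 r h.1]; exact sg_nonneg _ _
    · exact le_rfl
  refine ⟨fun r => if r ∈ T ∧ sg P r ≤ c then sg P r else τ r, ?_, ?_, ?_⟩
  · rw [feasible_iff h0]
    refine ⟨fun r hr => (h1 r hr).trans (hmono r hr), fun r hr => ?_⟩
    exact (h6 r hr (hAB r hr).1 (hAB r hr).2).mono h0 hmono
  · have hsub : P.filter (fun q => (if q ∈ T ∧ sg P q ≤ c then sg P q else τ q) ≠ sg P q) ⊆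
        T.filter (fun r => c < sg P r) ∪ {0, p} := by
      intro r hr
      rw [Finset.mem_filter] at hr
      obtain ⟨hr, hne⟩ := hr
      simp only [Finset.mem_union, Finset.mem_filter, Finset.mem_insert, Finset.mem_singleton]
      by_contra hc
      push Not at hc
      obtain ⟨c1, c2, c3⟩ := hc
      by_cases hrT : r ∈ T
      · rw [if_pos ⟨hrT, c1 hrT⟩] at hne
        exact hne rfl
      · rw [if_neg (fun h => hrT h.1)] at hne
        exact hne (hstd r hr c2 c3 hrT)
    have e1 := Finset.card_le_card hsub
    have e2 := Finset.card_union_le (T.filter (fun r => c < sg P r)) {0, p}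
    have e3 : ({0, p} : Finset ℝ).card ≤ 2 := Finset.card_le_two
    simp only at e1 ⊢
    omega
  · have e1 : cost α P (fun r => if r ∈ T ∧ sg P r ≤ c then sg P r else τ r) ≤
        ∑ r ∈ P, τ r ^ α + ∑ r ∈ T.filter (fun r => sg P r ≤ c), sg P r ^ α := by
      have : T.filter (fun r => sg P r ≤ c) = P.filter (fun r => r ∈ T ∧ sg P r ≤ c) := by
        ext x
        simp only [Finset.mem_filter]
        constructor
        · rintro ⟨a, b⟩; exact ⟨hT a, a, b⟩
        · rintro ⟨_, a, b⟩; exact ⟨a, b⟩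
      unfold cost
      rw [this, Finset.sum_filter, ← Finset.sum_add_distrib]
      apply Finset.sum_le_sum
      intro r hr
      dsimp only
      split_ifs
      · linarith [Real.rpow_nonneg (h1 r hr) α]
      · linarith
    have e2 : ∑ z ∈ Z, ρ z ^ α ≤ cost α P ρ :=
      Finset.sum_le_sum_of_subset_of_nonneg I.hZ (fun r hr _ => Real.rpow_nonneg (hf.1 r hr) _)
    have e3 : ρ p ^ α ≤ cost α P ρ :=
      Finset.single_le_sum (f := fun r => ρ r ^ α) (fun r hr => Real.rpow_nonneg (hf.1 r hr) _) hp
    nlinarith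

/-- The range assignment induced by an edge set. -/
noncomputable def rE (E : Finset (ℝ × ℝ)) (p : ℝ) : ℝ :=
  (((E.filter (fun e => e.1 = p)).sup (fun e => nndist e.1 e.2) : NNReal) : ℝ)

lemma exists_opt {α : ℝ} (hα : 1 < α) {P : Finset ℝ} (h0 : (0:ℝ) ∈ P) :
    ∃ ρ, Feasible P 0 ρ ∧ cost α P ρ ≤ opt α P 0 := by
  have round : ∀ ρ, Feasible P 0 ρ → ∃ E ∈ (P ×ˢ P).powerset, Feasible P 0 (rE E) ∧
      cost α P (rE E) ≤ cost α P ρ := by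
    intro ρ hf
    rw [feasible_iff h0] at hf
    set E := (P ×ˢ P).filter (fun e => dist e.1 e.2 ≤ ρ e.1) with hE
    refine ⟨E, by simp [hE], ?_, ?_⟩
    · rw [feasible_iff h0]
      refine ⟨fun p _ => NNReal.coe_nonneg _, fun p hp => ?_⟩
      have := hf.2 p hp
      clear hp
      induction this with
      | refl => exact Relation.ReflTransGen.refl
      | @tail b c h1 h ih =>
        refine ih.tail ⟨h.1, ?_⟩
        have hm : (b, c) ∈ E.filter (fun e => e.1 = b) := by
          simp only [hE, Finset.mem_filter, Finset.mem_product]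
          exact ⟨⟨⟨Rch.mem h0 h1, h.1⟩, h.2⟩, trivial⟩
        have := Finset.le_sup (f := fun e : ℝ × ℝ => nndist e.1 e.2) hm
        unfold rE
        rw [← coe_nndist]
        exact_mod_cast this
    · apply Finset.sum_le_sum
      intro p hp
      refine Real.rpow_le_rpow (NNReal.coe_nonneg _) ?_ (by linarith)
      unfold rE
      have : (E.filter (fun e => e.1 = p)).sup (fun e => nndist e.1 e.2) ≤ Real.toNNReal (ρ p) := by
        apply Finset.sup_le
        intro e he
        simp only [hE, Finset.mem_filter] at he
        have := he.1.2
        rw [he.2, ← coe_nndist] at this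
        rw [he.2]
        exact NNReal.le_toNNReal_of_coe_le this
      have := NNReal.coe_le_coe.2 this
      rwa [Real.coe_toNNReal _ (hf.1 p hp)] at this
  have hex : ∃ ρ, Feasible P 0 ρ := by
    refine ⟨fun _ => ∑ x ∈ P, |x|, ?_⟩
    rw [feasible_iff h0]
    refine ⟨fun _ _ => Finset.sum_nonneg (fun _ _ => abs_nonneg _), fun p hp => ?_⟩
    refine Relation.ReflTransGen.single ⟨hp, ?_⟩
    rw [Real.dist_eq, zero_sub, abs_neg]
    exact Finset.single_le_sum (f := fun x : ℝ => |x|) (fun _ _ => abs_nonneg _) hp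
  obtain ⟨ρ₀, hρ₀⟩ := hex
  obtain ⟨E₀, hE₀, hE₀f, -⟩ := round ρ₀ hρ₀
  obtain ⟨E, hE, hmin⟩ := Finset.exists_min_image
    ((P ×ˢ P).powerset.filter (fun E => Feasible P 0 (rE E))) (fun E => cost α P (rE E))
    ⟨E₀, Finset.mem_filter.2 ⟨hE₀, hE₀f⟩⟩
  refine ⟨rE E, (Finset.mem_filter.1 hE).2, ?_⟩
  apply le_csInf
  · exact ⟨_, ρ₀, hρ₀, rfl⟩
  · rintro c ⟨ρ, hρ, rfl⟩
    obtain ⟨E', hE', hf', hc'⟩ := round ρ hρ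
    exact (hmin E' (Finset.mem_filter.2 ⟨hE', hf'⟩)).trans hc'

/-- The dynamic broadcast range-assignment problem in ℝ¹ admits a stable
approximation scheme with stability parameter `k(ε) ≤ 2⌈(2^α/ε)^{1/(α-1)}⌉ + 6`. -/
theorem sas_in_R1 (α : ℝ) (hα : 1 < α) (ε : ℝ) (hε : 0 < ε) :
    ∃ k : ℕ, 0 < k ∧ k ≤ 2 * ⌈((2:ℝ) ^ α / ε) ^ ((1:ℝ) / (α - 1))⌉₊ + 6 ∧
    ∃ F : Finset ℝ → (ℝ → ℝ),
      (∀ P : Finset ℝ, (0:ℝ) ∈ P →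
        Feasible P 0 (F P) ∧ cost α P (F P) ≤ (1 + ε) * opt α P 0) ∧
      (∀ P : Finset ℝ, (0:ℝ) ∈ P → ∀ q : ℝ, q ∉ P →
        {p ∈ insert q (P : Set ℝ) |
          F (insert q P) p ≠ Function.update (F P) q 0 p}.ncard ≤ k) := by
  set K := ⌈((2:ℝ) ^ α / ε) ^ ((1:ℝ) / (α - 1))⌉₊ with hKdef
  have hK : ((2:ℝ) ^ α / ε) ^ ((1:ℝ) / (α - 1)) ≤ K := Nat.le_ceil _
  have hF : ∀ P : Finset ℝ, ∃ ρ : ℝ → ℝ, (0:ℝ) ∈ P → Feasible P 0 ρ ∧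
      (P.filter (fun p => ρ p ≠ sg P p)).card ≤ K + 2 ∧ cost α P ρ ≤ (1 + ε) * opt α P 0 := by
    intro P
    by_cases h0 : (0:ℝ) ∈ P
    · obtain ⟨ρ, hρ, hc⟩ := exists_opt hα h0
      obtain ⟨ρ', a, b, c⟩ := main_struct hα hε K hK h0 hρ
      exact ⟨ρ', fun _ => ⟨a, b, c.trans (mul_le_mul_of_nonneg_left hc (by linarith))⟩⟩
    · exact ⟨0, fun h => absurd h h0⟩
  choose F hF using hF
  refine ⟨2 * K + 6, by omega, le_rfl, F, fun P h0 => ⟨(hF P h0).1, (hF P h0).2.2⟩, ?_⟩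
  intro P h0 q hq
  have hD := (hF P h0).2.1
  have hD' := (hF (insert q P) (Finset.mem_insert_of_mem h0)).2.1
  have hS : (P.filter (fun p => sg (insert q P) p ≠ sg P p)).card ≤ 1 := by
    rw [Finset.card_le_one]
    intro a ha b hb
    rw [Finset.mem_filter] at ha hb
    exact sg_insert_sub q ha.1 hb.1 ha.2 hb.2
  set D := P.filter (fun p => F P p ≠ sg P p)
  set D' := (insert q P).filter (fun p => F (insert q P) p ≠ sg (insert q P) p)
  set S := P.filter (fun p => sg (insert q P) p ≠ sg P p)
  have hsub : {p ∈ insert q (P : Set ℝ) | F (insert q P) p ≠ Function.update (F P) q 0 p} ⊆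
      (((({q} ∪ S) ∪ D) ∪ D' : Finset ℝ) : Set ℝ) := by
    rintro p ⟨hp, hne⟩
    rw [Finset.mem_coe]
    simp only [Finset.mem_union, Finset.mem_singleton]
    by_contra hc
    push Not at hc
    obtain ⟨⟨⟨c1, c2⟩, c3⟩, c4⟩ := hc
    have hpP : p ∈ P := by
      rcases hp with h | h
      · exact absurd h c1
      · exact h
    rw [Function.update_of_ne c1] at hne
    have e2 : sg (insert q P) p = sg P p := by
      by_contra h
      exact c2 (Finset.mem_filter.2 ⟨hpP, h⟩)
    have e3 : F P p = sg P p := by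
      by_contra h
      exact c3 (Finset.mem_filter.2 ⟨hpP, h⟩)
    have e4 : F (insert q P) p = sg (insert q P) p := by
      by_contra h
      exact c4 (Finset.mem_filter.2 ⟨Finset.mem_insert_of_mem hpP, h⟩)
    exact hne (by rw [e4, e2, e3])
  have h1 := Set.ncard_le_ncard hsub (Finset.finite_toSet _)
  rw [Set.ncard_coe_finset] at h1
  have h2 := Finset.card_union_le (({q} ∪ S) ∪ D) D'
  have h3 := Finset.card_union_le ({q} ∪ S) D
  have h4 := Finset.card_union_le {q} S
  have h5 : ({q} : Finset ℝ).card = 1 := Finset.card_singleton q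
  omega
end

section
/- Let α > 1, let P be a finite set of more than 2 points on the circle S¹ of circumference 1 (the quotient ℝ/ℤ with its arc-length metric), with source s ∈ P. If ρ is an optimal feasible range assignment for P, i.e., ρ is feasible and cost_α(ρ) ≤ cost_α(ρ') for every feasible range assignment ρ' for P, then there exists a point r ∈ S¹ such that dist(p, r) > ρ(p) for every p ∈ P (i.e., r is not covered by any range of the optimal assignment). -/
open Finset

attribute [local instance] Classical.propDecidable

/-- Reachability from `s` through points of `P`. -/
def ReachFrom (P : Finset (AddCircle (1:ℝ))) (s : AddCircle (1:ℝ)) (ρ : AddCircle (1:ℝ) → ℝ)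
    (q : AddCircle (1:ℝ)) : Prop :=
  Relation.ReflTransGen (fun u v => v ∈ P ∧ dist u v ≤ ρ u) s q

lemma feasible_of_reach {P : Finset (AddCircle (1:ℝ))} {s : AddCircle (1:ℝ)}
    {ρ : AddCircle (1:ℝ) → ℝ} (hs : s ∈ P) (h0 : ∀ p ∈ P, 0 ≤ ρ p)
    (h : ∀ q ∈ P, ReachFrom P s ρ q) : Feasible P s ρ := by
  refine ⟨h0, fun q hq => ?_⟩
  have := h q hq
  clear hq
  induction this with
  | refl => exact ⟨0, fun _ => s, rfl, rfl, fun _ _ => hs, fun i hi => absurd hi (by omega)⟩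
  | @tail u v _ hv ih =>
    obtain ⟨m, f, hf0, hfm, hfP, hfd⟩ := ih
    refine ⟨m + 1, fun i => if i ≤ m then f i else v, by simp [hf0], by simp, ?_, ?_⟩
    · intro i _
      by_cases hi : i ≤ m
      · simp [hi, hfP i hi]
      · simp [hi, hv.1]
    · intro i hi
      have hi' : i ≤ m := by omega
      by_cases h2 : i + 1 ≤ m
      · simpa [hi', h2] using hfd i (by omega)
      · have : i = m := by omega
        subst this
        simpa [hfm] using hv.2

lemma exists_lift (x : AddCircle (1:ℝ)) : ∃ z : ℝ, (z : AddCircle (1:ℝ)) = x ∧ |z| = ‖x‖ := by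
  obtain ⟨y, rfl⟩ := QuotientAddGroup.mk_surjective x
  refine ⟨y - round y, ?_, ?_⟩
  · have : ((round y : ℝ) : AddCircle (1:ℝ)) = 0 := by
      rw [AddCircle.coe_eq_zero_iff]
      exact ⟨round y, by simp⟩
    rw [AddCircle.coe_sub, this, sub_zero]
  · have := AddCircle.norm_eq (p := (1:ℝ)) (x := y)
    simp at this
    exact this.symm

lemma norm_coe_le (z : ℝ) : ‖(z : AddCircle (1:ℝ))‖ ≤ |z| := by
  have := AddCircle.norm_eq (p := (1:ℝ)) (x := z)
  simp at this
  rw [this]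
  simpa using round_le z 0

lemma dist_le_iff (p r : ℝ) (x : AddCircle (1:ℝ)) :
    dist (p : AddCircle (1:ℝ)) x ≤ r ↔ ∃ y ∈ Set.Icc (p - r) (p + r), (y : AddCircle (1:ℝ)) = x := by
  constructor
  · intro h
    obtain ⟨z, hz, hz'⟩ := exists_lift (x - p)
    rw [dist_comm, dist_eq_norm, ← hz', abs_le] at h
    refine ⟨p + z, ⟨by linarith, by linarith⟩, ?_⟩
    rw [AddCircle.coe_add, hz]; abel
  · rintro ⟨y, ⟨h1, h2⟩, rfl⟩
    rw [dist_eq_norm, ← AddCircle.coe_sub]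
    refine (norm_coe_le _).trans ?_
    rw [abs_le]; constructor <;> linarith

lemma dist_le_half (x y : AddCircle (1:ℝ)) : dist x y ≤ 1 / 2 := by
  have := AddCircle.norm_le_half_period (p := (1:ℝ)) (x := x - y) one_ne_zero
  rw [dist_eq_norm]; simpa using this

lemma antipode_dist {p q : AddCircle (1:ℝ)} (h : dist p q = 1 / 2) (x : AddCircle (1:ℝ)) :
    dist x q ≤ 1 / 2 - dist p x := by
  have hhalf : ((1 / 2 : ℝ) : AddCircle (1:ℝ)) = ((-(1 / 2) : ℝ) : AddCircle (1:ℝ)) := by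
    rw [← sub_eq_zero, ← AddCircle.coe_sub, AddCircle.coe_eq_zero_iff]
    exact ⟨1, by norm_num⟩
  obtain ⟨w, hw, hw'⟩ := exists_lift (q - p)
  obtain ⟨z, hz, hz'⟩ := exists_lift (x - p)
  rw [dist_comm, dist_eq_norm, ← hw'] at h
  have hz2 : |z| ≤ 1 / 2 := by
    rw [hz', ← dist_eq_norm]; exact dist_le_half _ _
  have hq : q - p = ((1 / 2 : ℝ) : AddCircle (1:ℝ)) := by
    rw [← hw]
    rcases abs_choice w with hc | hc
    · rw [← hc, h]
    · have : w = -(1 / 2) := by linarith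
      rw [this, hhalf]
  rw [dist_comm p x, dist_eq_norm x p, ← hz', dist_eq_norm,
    show x - q = (x - p) - (q - p) by abel, ← hz]
  rcases le_total 0 z with hc | hc
  · rw [hq, ← AddCircle.coe_sub]
    refine (norm_coe_le _).trans ?_
    rw [abs_of_nonneg hc] at *
    rw [abs_of_nonpos (by linarith)]; linarith
  · rw [hq, hhalf, ← AddCircle.coe_sub]
    refine (norm_coe_le _).trans ?_
    rw [abs_of_nonpos hc] at *
    rw [abs_of_nonneg (by linarith)]; linarith

lemma rpow_super {α d e : ℝ} (hα : 1 < α) (hd : 0 < d) (he : 0 < e) :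
    d ^ α + e ^ α < (d + e) ^ α := by
  have key : ∀ t : ℝ, 0 < t → t ^ α = t * t ^ (α - 1) := by
    intro t ht
    rw [← Real.rpow_one_add' ht.le (by linarith)]; congr 1; ring
  rw [key d hd, key e he, key (d + e) (by linarith)]
  have h1 : d ^ (α - 1) < (d + e) ^ (α - 1) :=
    Real.rpow_lt_rpow hd.le (by linarith) (by linarith)
  have h2 : e ^ (α - 1) < (d + e) ^ (α - 1) :=
    Real.rpow_lt_rpow he.le (by linarith) (by linarith)
  nlinarith [mul_lt_mul_of_pos_left h1 hd, mul_lt_mul_of_pos_left h2 he]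

/-- The region covered by the transmitters in `A` (together with `s`). -/
def Cov (s : AddCircle (1:ℝ)) (ρ : AddCircle (1:ℝ) → ℝ) (A : Finset (AddCircle (1:ℝ)))
    (x : AddCircle (1:ℝ)) : Prop :=
  x = s ∨ ∃ u ∈ A, dist u x ≤ ρ u

/-- Everything covered by `A` is reached using only the ranges of `A`. -/
def SelfReach (P : Finset (AddCircle (1:ℝ))) (s : AddCircle (1:ℝ)) (ρ : AddCircle (1:ℝ) → ℝ)
    (A : Finset (AddCircle (1:ℝ))) : Prop :=
  ∀ ρ' : AddCircle (1:ℝ) → ℝ, (∀ u ∈ A, ρ u ≤ ρ' u) → ∀ q ∈ P, Cov s ρ A q → ReachFrom P s ρ' q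

/-- Shrinking one range is impossible. -/
lemma no_shrink {α : ℝ} (hα : 1 < α)
    {P : Finset (AddCircle (1:ℝ))} {s : AddCircle (1:ℝ)} (hs : s ∈ P)
    {ρ : AddCircle (1:ℝ) → ℝ} (hfeas : Feasible P s ρ)
    (hopt : ∀ ρ' : AddCircle (1:ℝ) → ℝ, Feasible P s ρ' → cost α P ρ ≤ cost α P ρ')
    {A : Finset (AddCircle (1:ℝ))} (hA : SelfReach P s ρ A) {p : AddCircle (1:ℝ)}
    (hp : p ∈ P) (hpA : p ∉ A) (hpc : Cov s ρ A p) (hr : 0 < ρ p)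
    (h : ∀ q ∈ P, ¬ Cov s ρ A q → dist p q < ρ p) : False := by
  obtain ⟨t, ht0, htr, ht⟩ : ∃ t, 0 ≤ t ∧ t < ρ p ∧ ∀ q ∈ P, ¬ Cov s ρ A q → dist p q ≤ t := by
    let Q := P.filter (fun q => ¬ Cov s ρ A q)
    by_cases hQ : Q.Nonempty
    · obtain ⟨x, hx, hmax⟩ := Q.exists_max_image (fun q => dist p q) hQ
      have hx' := Finset.mem_filter.1 hx
      exact ⟨dist p x, dist_nonneg, h x hx'.1 hx'.2,
        fun q hq hqc => hmax q (Finset.mem_filter.2 ⟨hq, hqc⟩)⟩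
    · refine ⟨0, le_rfl, hr, fun q hq hqc => ?_⟩
      exact absurd ⟨q, Finset.mem_filter.2 ⟨hq, hqc⟩⟩ hQ
  have hge : ∀ u ∈ A, ρ u ≤ Function.update ρ p t u := by
    intro u hu
    have : u ≠ p := fun e => hpA (e ▸ hu)
    simp [Function.update_of_ne this]
  have hf : Feasible P s (Function.update ρ p t) := by
    refine feasible_of_reach hs ?_ ?_
    · intro u hu
      by_cases e : u = p
      · subst e; simpa using ht0
      · simpa [Function.update_of_ne e] using hfeas.1 u hu
    · intro q hq
      by_cases hc : Cov s ρ A q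
      · exact hA _ hge q hq hc
      · exact (hA _ hge p hp hpc).tail ⟨hq, by simpa using ht q hq hc⟩
  refine absurd (hopt _ hf) (not_le.2 ?_)
  refine Finset.sum_lt_sum ?_ ⟨p, hp, ?_⟩
  · intro u hu
    by_cases e : u = p
    · subst e
      simpa using Real.rpow_le_rpow ht0 htr.le (by linarith)
    · simp [Function.update_of_ne e]
  · simpa using Real.rpow_lt_rpow ht0 htr (by linarith)

/-- A range reaching an antipode can be rerouted. -/
lemma no_half {α : ℝ} (hα : 1 < α)
    {P : Finset (AddCircle (1:ℝ))} {s : AddCircle (1:ℝ)} (hs : s ∈ P) (hcard : 2 < P.card)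
    {ρ : AddCircle (1:ℝ) → ℝ} (hfeas : Feasible P s ρ)
    (hopt : ∀ ρ' : AddCircle (1:ℝ) → ℝ, Feasible P s ρ' → cost α P ρ ≤ cost α P ρ')
    {A : Finset (AddCircle (1:ℝ))} (hA : SelfReach P s ρ A) {p : AddCircle (1:ℝ)}
    (hp : p ∈ P) (hpA : p ∉ A) (hpc : Cov s ρ A p) (hr : 1 / 2 ≤ ρ p)
    {q0 : AddCircle (1:ℝ)} (hd0 : dist p q0 = 1 / 2) : False := by
  obtain ⟨y, hyP, hy⟩ : ∃ y ∈ P, y ∉ ({p, q0} : Finset (AddCircle (1:ℝ))) := by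
    by_contra! hcon
    have h1 := Finset.card_le_card (show P ⊆ {p, q0} from hcon)
    have h2 := Finset.card_le_two (a := p) (b := q0)
    omega
  simp only [Finset.mem_insert, Finset.mem_singleton, not_or] at hy
  obtain ⟨x, hx, hmax⟩ := (P.erase q0).exists_max_image (fun q => dist p q)
    ⟨y, Finset.mem_erase.2 ⟨hy.2, hyP⟩⟩
  obtain ⟨hxq, hxP⟩ := Finset.mem_erase.1 hx
  have hd : 0 < dist p x :=
    (dist_pos.2 (Ne.symm hy.1)).trans_le (hmax y (Finset.mem_erase.2 ⟨hy.2, hyP⟩))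
  have hxp : x ≠ p := fun e => by simp [e] at hd
  have hanti := antipode_dist hd0 x
  have hd2 : 0 < 1 / 2 - dist p x := (dist_pos.2 hxq).trans_le hanti
  set d := dist p x with hdd
  set ρ' : AddCircle (1:ℝ) → ℝ :=
    Function.update (Function.update ρ x (max (ρ x) (1 / 2 - d))) p d with hρ'
  have hρp : ρ' p = d := by simp [hρ']
  have hρx : ρ' x = max (ρ x) (1 / 2 - d) := by
    simp [hρ', Function.update_of_ne hxp]
  have hρo : ∀ u, u ≠ p → u ≠ x → ρ' u = ρ u := by
    intro u h1 h2
    simp [hρ', Function.update_of_ne h1, Function.update_of_ne h2]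
  have hge : ∀ u ∈ A, ρ u ≤ ρ' u := by
    intro u hu
    have h1 : u ≠ p := fun e => hpA (e ▸ hu)
    by_cases h2 : u = x
    · rw [h2, hρx]; exact le_max_left _ _
    · rw [hρo u h1 h2]
  have hrp := hA _ hge p hp hpc
  have hro : ∀ q ∈ P, q ≠ q0 → ReachFrom P s ρ' q := fun q hq hne =>
    hrp.tail ⟨hq, by rw [hρp]; exact hmax q (Finset.mem_erase.2 ⟨hne, hq⟩)⟩
  have hf : Feasible P s ρ' := by
    refine feasible_of_reach hs ?_ ?_
    · intro u hu
      by_cases h1 : u = p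
      · rw [h1, hρp]; exact hd.le
      by_cases h2 : u = x
      · rw [h2, hρx]; exact le_max_of_le_right hd2.le
      rw [hρo u h1 h2]; exact hfeas.1 u hu
    · intro q hq
      by_cases e : q = q0
      · refine (hro x hxP hxq).tail ⟨hq, ?_⟩
        rw [e, hρx]; exact le_max_of_le_right hanti
      · exact hro q hq e
  refine absurd (hopt _ hf) (not_le.2 ?_)
  unfold cost
  have hxe : x ∈ P.erase p := Finset.mem_erase.2 ⟨hxp, hxP⟩
  rw [← Finset.add_sum_erase P _ hp, ← Finset.add_sum_erase _ _ hxe,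
    ← Finset.add_sum_erase P (fun u => ρ u ^ α) hp,
    ← Finset.add_sum_erase _ (fun u => ρ u ^ α) hxe]
  have hsum : ∑ u ∈ (P.erase p).erase x, ρ' u ^ α = ∑ u ∈ (P.erase p).erase x, ρ u ^ α := by
    refine Finset.sum_congr rfl fun u hu => ?_
    have h2 := Finset.mem_erase.1 hu
    have h1 := Finset.mem_erase.1 h2.2
    rw [hρo u h1.1 h2.1]
  rw [hsum, hρp, hρx]
  have h1 : (max (ρ x) (1 / 2 - d)) ^ α ≤ ρ x ^ α + (1 / 2 - d) ^ α := by
    have a1 := Real.rpow_nonneg (hfeas.1 x hxP) α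
    have a2 := Real.rpow_nonneg hd2.le α
    rcases max_choice (ρ x) (1 / 2 - d) with e | e <;> rw [e] <;> linarith
  have h2 := rpow_super hα hd hd2
  have h3 : (d + (1 / 2 - d)) ^ α ≤ ρ p ^ α :=
    Real.rpow_le_rpow (by linarith) (by linarith) (by linarith)
  linarith

lemma exists_lift_Ico (a : ℝ) (x : AddCircle (1:ℝ)) :
    ∃ y ∈ Set.Ico a (a + 1), (y : AddCircle (1:ℝ)) = x := by
  have := AddCircle.coe_image_Ico_eq (p := (1:ℝ)) a
  have hx : x ∈ ((↑) : ℝ → AddCircle (1:ℝ)) '' Set.Ico a (a + 1) := by rw [this]; trivial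
  exact hx

lemma coe_add_one' (y : ℝ) : ((y - 1 : ℝ) : AddCircle (1:ℝ)) = y := by
  rw [AddCircle.coe_sub, AddCircle.coe_period, sub_zero]

lemma growth {α : ℝ} (hα : 1 < α)
    {P : Finset (AddCircle (1:ℝ))} {s : AddCircle (1:ℝ)} (hs : s ∈ P) (hcard : 2 < P.card)
    {ρ : AddCircle (1:ℝ) → ℝ} (hfeas : Feasible P s ρ)
    (hopt : ∀ ρ' : AddCircle (1:ℝ) → ℝ, Feasible P s ρ' → cost α P ρ ≤ cost α P ρ')
    (n : ℕ) (hn : n ≤ P.card) :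
    ∃ A ⊆ P, A.card = n ∧ SelfReach P s ρ A ∧ ∃ a b : ℝ, a ≤ b ∧ b < a + 1 ∧
      ∀ x, Cov s ρ A x ↔ ∃ y ∈ Set.Icc a b, (y : AddCircle (1:ℝ)) = x := by
  induction n with
  | zero =>
    obtain ⟨z, hz, -⟩ := exists_lift s
    refine ⟨∅, by simp, rfl, ?_, z, z, le_rfl, by linarith, ?_⟩
    · intro ρ' _ q _ hc
      simp only [Cov, Finset.notMem_empty, false_and, exists_false, or_false] at hc
      subst hc
      exact Relation.ReflTransGen.refl
    · intro x
      simp [Cov, hz, eq_comm]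
  | succ n ih =>
    obtain ⟨A, hAP, hAc, hA, a, b, hab, hba, hcov⟩ := ih (by omega)
    obtain ⟨p, hp, hpA, hpc⟩ : ∃ p ∈ P, p ∉ A ∧ Cov s ρ A p := by
      by_contra! hcon
      have hsub : P ⊆ A := by
        intro q hq
        obtain ⟨m, f, hf0, hfm, hfP, hfd⟩ := hfeas.2 q hq
        have : ∀ i ≤ m, f i ∈ A := by
          intro i
          induction i with
          | zero =>
            intro _
            by_contra hnot
            exact hcon _ (hfP 0 (by omega)) hnot (Or.inl hf0)
          | succ i ihi =>
            intro hi
            by_contra hnot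
            exact hcon _ (hfP _ hi) hnot (Or.inr ⟨f i, ihi (by omega), hfd i (by omega)⟩)
        rw [← hfm]; exact this m le_rfl
      have := Finset.card_le_card hsub
      omega
    obtain ⟨z, ⟨hza, hzb⟩, hz⟩ := (hcov p).1 hpc
    have hr0 := hfeas.1 p hp
    set r := ρ p with hrdef
    have hcov' : ∀ x, Cov s ρ (insert p A) x ↔ Cov s ρ A x ∨ dist p x ≤ r := by
      intro x
      simp only [Cov, Finset.mem_insert, exists_eq_or_imp]
      rw [← hrdef, or_comm (a := dist p x ≤ r), or_assoc]
    by_cases hlen : max b (z + r) < min a (z - r) + 1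
    · refine ⟨insert p A, Finset.insert_subset hp hAP, by rw [Finset.card_insert_of_notMem hpA, hAc],
        ?_, min a (z - r), max b (z + r), ?_, hlen, ?_⟩
      · intro ρ' hge q hq hc
        have hge' : ∀ u ∈ A, ρ u ≤ ρ' u := fun u hu => hge u (Finset.mem_insert_of_mem hu)
        rcases (hcov' q).1 hc with h | h
        · exact hA ρ' hge' q hq h
        · exact (hA ρ' hge' p hp hpc).tail
            ⟨hq, h.trans (hge p (Finset.mem_insert_self _ _))⟩
      · exact (min_le_left _ _).trans (hab.trans (le_max_left _ _))
      · intro x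
        rw [hcov', hcov, ← hz, dist_le_iff]
        constructor
        · rintro (⟨y, ⟨h1, h2⟩, rfl⟩ | ⟨y, ⟨h1, h2⟩, rfl⟩)
          · exact ⟨y, ⟨(min_le_left _ _).trans h1, h2.trans (le_max_left _ _)⟩, rfl⟩
          · exact ⟨y, ⟨(min_le_right _ _).trans h1, h2.trans (le_max_right _ _)⟩, rfl⟩
        · rintro ⟨y, ⟨h1, h2⟩, rfl⟩
          rw [min_le_iff] at h1
          rw [le_max_iff] at h2
          by_cases hy : y ∈ Set.Icc a b
          · exact Or.inl ⟨y, hy, rfl⟩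
          · right
            refine ⟨y, ?_, rfl⟩
            rw [Set.mem_Icc, not_and_or, not_le, not_le] at hy
            constructor
            · rcases hy with hy | hy
              · rcases h1 with h1 | h1 <;> linarith
              · linarith
            · rcases hy with hy | hy
              · linarith
              · rcases h2 with h2 | h2 <;> linarith
    · exfalso
      rw [not_lt] at hlen
      have hgap : ∀ q, ¬ Cov s ρ A q → ∃ y, b < y ∧ y < a + 1 ∧ (y : AddCircle (1:ℝ)) = q := by
        intro q hq
        obtain ⟨y, ⟨h1, h2⟩, rfl⟩ := exists_lift_Ico a q
        refine ⟨y, ?_, h2, rfl⟩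
        by_contra hb
        exact hq ((hcov _).2 ⟨y, ⟨h1, not_lt.1 hb⟩, rfl⟩)
      have hrpos : 0 < r := by
        by_contra hneg
        have : r = 0 := le_antisymm (not_lt.1 hneg) hr0
        rw [this, add_zero, sub_zero, max_eq_left hzb, min_eq_left hza] at hlen
        linarith
      have hex : ∃ q0 ∈ P, ¬ Cov s ρ A q0 ∧ r ≤ dist p q0 := by
        by_contra! hcon
        exact no_shrink hα hs hfeas hopt hA hp hpA hpc hrpos hcon
      obtain ⟨q0, hq0, hq0c, hq0d⟩ := hex
      obtain ⟨y, hy1, hy2, hy⟩ := hgap q0 hq0c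
      have e1 : dist p q0 ≤ y - z := by
        rw [← hz, ← hy, dist_le_iff]
        exact ⟨y, ⟨by linarith, by linarith⟩, rfl⟩
      have e2 : dist p q0 ≤ z - (y - 1) := by
        rw [← hz, ← hy, dist_le_iff]
        exact ⟨y - 1, ⟨by linarith, by linarith⟩, coe_add_one' y⟩
      have hrhalf : 1 / 2 ≤ r := by
        rcases max_choice b (z + r) with h1 | h1 <;> rcases min_choice a (z - r) with h2 | h2 <;>
          rw [h1, h2] at hlen <;> linarith
      have hd0 : dist p q0 = 1 / 2 := le_antisymm (dist_le_half _ _) (hrhalf.trans hq0d)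
      exact no_half hα hs hcard hfeas hopt hA hp hpA hpc hrhalf hd0

/-- For any optimal feasible range assignment on a set of more than 2 points
on the circle `S¹ = ℝ/ℤ` of circumference 1, some point `r` of the circle is uncovered. -/
theorem optimal_circle_uncovered_point (α : ℝ) (hα : 1 < α)
    (P : Finset (AddCircle (1:ℝ))) (s : AddCircle (1:ℝ)) (hs : s ∈ P) (hcard : 2 < P.card)
    (ρ : AddCircle (1:ℝ) → ℝ) (hfeas : Feasible P s ρ)
    (hopt : ∀ ρ' : AddCircle (1:ℝ) → ℝ, Feasible P s ρ' → cost α P ρ ≤ cost α P ρ') :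
    ∃ r : AddCircle (1:ℝ), ∀ p ∈ P, ρ p < dist p r := by
  obtain ⟨A, hAP, hAc, -, a, b, hab, hba, hcov⟩ :=
    growth hα hs hcard hfeas hopt P.card le_rfl
  have hAe : A = P := Finset.eq_of_subset_of_card_le hAP hAc.ge
  subst hAe
  refine ⟨(((a + b + 1) / 2 : ℝ) : AddCircle (1:ℝ)), fun p hp => ?_⟩
  by_contra hcon
  obtain ⟨y, ⟨h1, h2⟩, hy⟩ := (hcov _).1 (Or.inr ⟨p, hp, not_lt.1 hcon⟩)
  have := (AddCircle.coe_eq_coe_iff_of_mem_Ico (p := (1:ℝ)) (a := a) (x := y)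
    (y := (a + b + 1) / 2) ⟨h1, by linarith⟩ ⟨by linarith, by linarith⟩).1 hy
  linarith
end
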